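/- Let H be an edge-colored weighted hypergraph, let b ∈ ℤ_{≥1} be a removal budget, and let τ ∈ ℤ_{≥0}. Suppose (α, β, λ) is dual feasible for Robust ECC and α_v ≤ (1/2) · Σ_{e ∈ δ(v)} β_{e,v} for every v ∈ V. Let V_R ⊆ V with |V_R| ≤ b + τ and σ : V ∖ V_R → C be such that every edge that is a mistake under (V_R, σ) is tight, and suppose there exists R' ⊆ V with V_R ⊆ R', |R'| ≥ b + τ + 1, and Σ_{e ∈ δ(v)} β_{e,v} − α_v = λ for every v ∈ R'. Then the cost of (V_R, σ) is at most (2 + 2b/(τ+1)) times the cost of (V_R', σ'), for every pair (V_R', σ') with V_R' ⊆ V, |V_R'| ≤ b, and σ' : V ∖ V_R' → C. (Bicriteria guarantee for Robust ECC: with τ = ⌈2b/ε⌉ − 1 this yields a (2+ε, 1 + (1/b)⌈2b/ε⌉ − 1/b)-approximation.) -/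

import Mathlib

/-!
Write `S v = ∑ e ∋ v, β e v` and `Y v = S v - α v`. Half-boundedness of `α` gives
`S v ≤ 2 * Y v`, so in particular `Y ≥ 0`. Since all mistakes of `(VR, σ)` are tight, its cost is
at most `∑ v, S v ≤ 2 * ∑ v, Y v`.

By weak duality, any `(VR', σ')` costs at least `∑ v ∉ VR', Y v`: every edge at `v ∉ VR'` whose
color differs from `σ' v` is a mistake, and the edges at `v` of color `σ' v` carry at most `α v`
of `S v` (`sum_slack_le_cost`). If `|VR'| ≤ b`, this lower bound is at least
`(∑ v, Y v) - b * lam` because `Y ≤ lam`, and at least `(τ + 1) * lam` because `Y = lam` on `R'`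
and `R' \ VR'` has at least `τ + 1` elements. Eliminating `lam` from the two bounds yields the
factor `2 * (1 + b / (τ + 1))`.
-/

/-- Exchange of summation: a sum over incident pairs can be grouped by edges or by vertices. -/
lemma sum_edges_eq_sum_vertices {V E : Type*} [Fintype V] [Fintype E] [DecidableEq V]
    (ed : E → Finset V) (β : E → V → ℝ) :
    ∑ e, ∑ v ∈ ed e, β e v =
      ∑ v, ∑ e ∈ Finset.univ.filter (fun e => v ∈ ed e), β e v :=
  Finset.sum_comm' (by simp)

/-- Weak duality: the dual slacks `∑ e ∋ v, β e v - α v` of the vertices that are kept sum to a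
lower bound on the cost of any solution. -/
lemma sum_slack_le_cost {V E C : Type*} [Fintype V] [Fintype E]
    [DecidableEq V] [DecidableEq C]
    (ed : E → Finset V) (w : E → ℝ) (col : E → C) (α : V → ℝ) (β : E → V → ℝ)
    (hβ : ∀ e, ∀ v ∈ ed e, 0 ≤ β e v)
    (hdual1 : ∀ (v : V) (c : C),
      ∑ e ∈ Finset.univ.filter (fun e => v ∈ ed e ∧ col e = c), β e v ≤ α v)
    (hdual2 : ∀ e, ∑ v ∈ ed e, β e v ≤ w e) (R : Finset V) (σ : V → C) :
    ∑ v ∈ Rᶜ, (∑ e ∈ Finset.univ.filter (fun e => v ∈ ed e), β e v - α v) ≤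
      ∑ e ∈ Finset.univ.filter (fun e => ∃ v ∈ ed e, v ∉ R ∧ σ v ≠ col e), w e := by
  calc ∑ v ∈ Rᶜ, (∑ e ∈ Finset.univ.filter (fun e => v ∈ ed e), β e v - α v)
      ≤ ∑ v ∈ Rᶜ, ∑ e ∈ Finset.univ.filter (fun e => v ∈ ed e ∧ ¬ col e = σ v), β e v := by
        refine Finset.sum_le_sum fun v _ => ?_
        have h := Finset.sum_filter_add_sum_filter_not
          (Finset.univ.filter (fun e => v ∈ ed e)) (fun e => col e = σ v) (fun e => β e v)
        rw [Finset.filter_filter, Finset.filter_filter] at h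
        linarith [hdual1 v (σ v)]
    _ = ∑ e ∈ Finset.univ.filter (fun e => ∃ v ∈ ed e, v ∉ R ∧ σ v ≠ col e),
          ∑ v ∈ (ed e).filter (fun v => v ∉ R ∧ σ v ≠ col e), β e v := by
        refine Finset.sum_comm' fun v e => ?_
        simp only [Finset.mem_compl, Finset.mem_filter, Finset.mem_univ, true_and]
        constructor
        · rintro ⟨h1, h2, h3⟩
          exact ⟨⟨h2, h1, Ne.symm h3⟩, v, h2, h1, Ne.symm h3⟩
        · rintro ⟨⟨h1, h2, h3⟩, _⟩
          exact ⟨h2, h1, Ne.symm h3⟩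
    _ ≤ _ := by
        refine Finset.sum_le_sum fun e _ => le_trans ?_ (hdual2 e)
        exact Finset.sum_le_sum_of_subset_of_nonneg (Finset.filter_subset _ _)
          fun v hv _ => hβ e v hv

/-- Bicriteria guarantee for Robust ECC: with budget `b ≥ 1` and
relaxation `τ ≥ 0`, if `(α, β, λ)` is dual feasible, `α_v ≤ (1/2) Σ_{e ∈ δ(v)} β_{e,v}`
for every `v`, `(V_R, σ)` with `|V_R| ≤ b + τ` has all its mistakes tight, and there is
`R' ⊇ V_R` with `|R'| ≥ b + τ + 1` such that `Σ_{e ∈ δ(v)} β_{e,v} − α_v = λ` for every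
`v ∈ R'`, then the cost of `(V_R, σ)` is at most `2 + 2b/(τ+1)` times the cost of every
`(V_R', σ')` with `|V_R'| ≤ b`. -/
theorem robust_ecc_bicriteria_guarantee
    {V E C : Type*} [Fintype V] [Fintype E] [Fintype C]
    [DecidableEq V] [DecidableEq C]
    (ed : E → Finset V) (w : E → ℝ) (col : E → C)
    (hw : ∀ e, 0 ≤ w e)
    (b τ : ℕ) (hb : 1 ≤ b)
    (α : V → ℝ) (β : E → V → ℝ) (lam : ℝ)
    (hα : ∀ v, 0 ≤ α v)
    (hβ : ∀ e, ∀ v ∈ ed e, 0 ≤ β e v)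
    (hlam : 0 ≤ lam)
    (hdual1 : ∀ (v : V) (c : C),
      ∑ e ∈ Finset.univ.filter (fun e => v ∈ ed e ∧ col e = c), β e v ≤ α v)
    (hdual2 : ∀ e, ∑ v ∈ ed e, β e v ≤ w e)
    (hdual3 : ∀ v,
      ∑ e ∈ Finset.univ.filter (fun e => v ∈ ed e), β e v - α v ≤ lam)
    (hhalf : ∀ v, α v ≤ (1 / 2) *
      ∑ e ∈ Finset.univ.filter (fun e => v ∈ ed e), β e v)
    (VR : Finset V) (hVR : VR.card ≤ b + τ) (σ : V → C)
    (htight : ∀ e, (∃ v ∈ ed e, v ∉ VR ∧ σ v ≠ col e) → ∑ v ∈ ed e, β e v = w e)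
    (R' : Finset V) (hsub : VR ⊆ R') (hR'card : b + τ + 1 ≤ R'.card)
    (hR' : ∀ v ∈ R',
      ∑ e ∈ Finset.univ.filter (fun e => v ∈ ed e), β e v - α v = lam) :
    ∀ (VR' : Finset V), VR'.card ≤ b → ∀ σ' : V → C,
      ∑ e ∈ Finset.univ.filter (fun e => ∃ v ∈ ed e, v ∉ VR ∧ σ v ≠ col e), w e ≤
        (2 + 2 * (b : ℝ) / ((τ : ℝ) + 1)) *
          ∑ e ∈ Finset.univ.filter (fun e => ∃ v ∈ ed e, v ∉ VR' ∧ σ' v ≠ col e), w e := by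
  intro VR' hVR' σ'
  have hopt := sum_slack_le_cost ed w col α β hβ hdual1 hdual2 VR' σ'
  set opt := ∑ e ∈ Finset.univ.filter (fun e => ∃ v ∈ ed e, v ∉ VR' ∧ σ' v ≠ col e), w e
  set S : V → ℝ := fun v => ∑ e ∈ Finset.univ.filter (fun e => v ∈ ed e), β e v with hS
  have hS0 : ∀ v, 0 ≤ S v := fun v =>
    Finset.sum_nonneg fun e he => hβ e v (Finset.mem_filter.1 he).2
  have hhalf' : ∀ v, S v ≤ 2 * (S v - α v) := fun v => by
    have : α v ≤ 1 / 2 * S v := hhalf v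
    linarith
  have halg : ∑ e ∈ Finset.univ.filter (fun e => ∃ v ∈ ed e, v ∉ VR ∧ σ v ≠ col e), w e ≤
      2 * ∑ v, (S v - α v) := by
    calc _ = ∑ e ∈ Finset.univ.filter (fun e => ∃ v ∈ ed e, v ∉ VR ∧ σ v ≠ col e),
          ∑ v ∈ ed e, β e v :=
          Finset.sum_congr rfl fun e he => (htight e (Finset.mem_filter.1 he).2).symm
      _ ≤ ∑ e, ∑ v ∈ ed e, β e v :=
          Finset.sum_le_sum_of_subset_of_nonneg (Finset.filter_subset _ _)
            fun e _ _ => Finset.sum_nonneg (hβ e)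
      _ = ∑ v, S v := sum_edges_eq_sum_vertices ed β
      _ ≤ _ := by
          rw [Finset.mul_sum]
          exact Finset.sum_le_sum fun v _ => hhalf' v
  have hremoved : ∑ v ∈ VR', (S v - α v) ≤ b * lam := by
    calc _ ≤ VR'.card • lam := Finset.sum_le_card_nsmul _ _ _ fun v _ => hdual3 v
      _ ≤ b * lam := by
          rw [nsmul_eq_mul]
          gcongr
  have hkept : ((τ : ℝ) + 1) * lam ≤ ∑ v ∈ VR'ᶜ, (S v - α v) := by
    have hcard : τ + 1 ≤ (R' \ VR').card := by
      have := Finset.le_card_sdiff VR' R'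
      omega
    calc ((τ : ℝ) + 1) * lam ≤ ((R' \ VR').card : ℝ) * lam := by
          gcongr
          exact_mod_cast hcard
      _ = ∑ v ∈ R' \ VR', (S v - α v) := by
          rw [Finset.sum_congr rfl fun v hv => hR' v (Finset.mem_sdiff.1 hv).1]
          simp
      _ ≤ _ := by
          refine Finset.sum_le_sum_of_subset_of_nonneg (fun v hv => ?_) fun v _ _ => ?_
          · exact Finset.mem_compl.2 (Finset.mem_sdiff.1 hv).2
          · linarith [hhalf' v, hS0 v]
  have hsplit := Finset.sum_add_sum_compl VR' (fun v => S v - α v)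
  have hτ : (0 : ℝ) < τ + 1 := by positivity
  have hlam' : lam ≤ opt / (τ + 1) := by
    rw [le_div_iff₀ hτ]
    linarith
  have hblam : b * lam ≤ b * (opt / (τ + 1)) := by gcongr
  calc _ ≤ 2 * (opt + b * (opt / (τ + 1))) := by linarith
    _ = _ := by ring
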